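/- arXiv:2005.13011 — 2 statements merged into one kernel-verified Lean document; each statement's English description precedes it below -/
import Mathlib

section
/- (Theorem 2, property 2, for f̂) The acceptance rate of the bidirectional acceptance sampling for the target density f̂ equals 1/M*: P(E⁻₁ ∪ E⁺) = 1/M*. -/
open MeasureTheory ProbabilityTheory Set

/-!
Where `g ≤ f`, the events `E⁺₁` and `E⁺₂` cut the acceptance region `V * M ≤ f X / h X` at the level
`g X / h X`; where `f < g`, the event `E⁻₁` is that same region. Hence the bidirectional scheme
accepts `f` exactly when ordinary rejection sampling does. Given `X = x`, rejection sampling accepts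
with probability `min (f x / h x / M) 1`, and integrating this against the density `h` of `X` leaves
`∫ f / M`, because `f ≤ M * h`.
-/

section Pointwise

variable {𝕜 : Type*} [Field 𝕜] [LinearOrder 𝕜] [IsStrictOrderedRing 𝕜]

lemma mul_min_div_div_one {f h M : 𝕜} (hM : 0 < M) (f_nonneg : 0 ≤ f) (hf : f ≤ M * h) :
    h * min (f / h / M) 1 = f / M := by
  have h_nonneg : 0 ≤ h := nonneg_of_mul_nonneg_right (f_nonneg.trans hf) hM
  rcases h_nonneg.eq_or_lt with rfl | h_pos
  · have hf0 : f = 0 := le_antisymm (by simpa only [mul_zero] using hf) f_nonneg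
    rw [hf0, zero_mul, zero_div]
  · have hle : f / h / M ≤ 1 := by
      rwa [div_div, div_le_one (mul_pos h_pos hM), mul_comm]
    rw [min_eq_left hle]
    field_simp

lemma bidirectional_acceptance_eq_setOf_le_div {Ω : Type*} {f g h u : Ω → 𝕜}
    (h_nonneg : ∀ ω, 0 ≤ h ω) :
    {ω | f ω < g ω ∧ u ω ≤ f ω / h ω} ∪
        ({ω | g ω ≤ f ω ∧ u ω ≤ g ω / h ω} ∪
          {ω | g ω ≤ f ω ∧ g ω / h ω < u ω ∧ u ω ≤ f ω / h ω}) =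
      {ω | u ω ≤ f ω / h ω} := by
  ext ω
  have hdiv : g ω ≤ f ω → g ω / h ω ≤ f ω / h ω := fun hgf ↦
    div_le_div_of_nonneg_right hgf (h_nonneg ω)
  simp only [mem_union, mem_ofPred_eq]
  grind

end Pointwise

lemma volume_restrict_Icc_zero_one_Iic (t : ℝ) :
    volume.restrict (Icc (0 : ℝ) 1) (Iic t) = ENNReal.ofReal (min t 1) := by
  have Iic_inter_Icc : Iic t ∩ Icc 0 1 = Icc 0 (min t 1) := by
    rw [← Ici_inter_Iic, inter_left_comm, Iic_inter_Iic, Ici_inter_Iic]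
  rw [Measure.restrict_apply measurableSet_Iic, Iic_inter_Icc, Real.volume_Icc, sub_zero]

section Sampling

variable {Ω E : Type*} [MeasurableSpace Ω] [MeasurableSpace E] {P : Measure Ω} {X : Ω → E}

lemma measure_setOf_le_comp_eq_lintegral [IsFiniteMeasure P] {R : Type*}
    [TopologicalSpace R] [PartialOrder R] [OrderClosedTopology R] [SecondCountableTopology R]
    [MeasurableSpace R] [OpensMeasurableSpace R] {ν : Measure E} {ρ : Measure R} [SFinite ρ]
    {V : Ω → R} (hX : HasLaw X ν P) (hV : HasLaw V ρ P) (hXV : IndepFun X V P)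
    {φ : E → R} (hφ : Measurable φ) :
    P {ω | V ω ≤ φ (X ω)} = ∫⁻ x, ρ (Iic (φ x)) ∂ν := by
  have hS : MeasurableSet {p : E × R | p.2 ≤ φ p.1} :=
    measurableSet_le measurable_snd (hφ.comp measurable_fst)
  rw [(hXV.hasLaw_prod hX hV).measure_eq hS, Measure.prod_apply hS]
  rfl

variable {μ : Measure E} {f h : E → ℝ} {M : ℝ} {V : Ω → ℝ}

theorem measureReal_rejection_acceptance (hmeas_h : Measurable h) (hmeas_f : Measurable f)
    (f_nonneg : 0 ≤ᵐ[μ] f) (hM : 0 < M) (hf : ∀ᵐ x ∂μ, f x ≤ M * h x)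
    (hX : HasLaw X (μ.withDensity fun x ↦ ENNReal.ofReal (h x)) P)
    (hV : HasLaw V (volume.restrict (Icc 0 1)) P) (hXV : IndepFun X V P) :
    P.real {ω | V ω * M ≤ f (X ω) / h (X ω)} = (∫ x, f x ∂μ) / M := by
  have : IsFiniteMeasure P := hV.isFiniteMeasure
  have hφ : Measurable fun x ↦ f x / h x / M := (hmeas_f.div hmeas_h).div_const M
  have acceptance_lintegral :
      P {ω | V ω * M ≤ f (X ω) / h (X ω)} = ∫⁻ x, ENNReal.ofReal (f x / M) ∂μ := by
    simp only [← le_div_iff₀ hM]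
    rw [measure_setOf_le_comp_eq_lintegral hX hV hXV hφ]
    simp only [volume_restrict_Icc_zero_one_Iic]
    rw [lintegral_withDensity_eq_lintegral_mul _ hmeas_h.ennreal_ofReal
      (hφ.min measurable_const).ennreal_ofReal]
    refine lintegral_congr_ae ?_
    filter_upwards [f_nonneg, hf] with x hfx_nonneg hfx
    have hx_nonneg : 0 ≤ h x := nonneg_of_mul_nonneg_right (hfx_nonneg.trans hfx) hM
    rw [Pi.mul_apply, ← ENNReal.ofReal_mul hx_nonneg, mul_min_div_div_one hM hfx_nonneg hfx]
  have quotient_nonneg : 0 ≤ᵐ[μ] fun x ↦ f x / M :=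
    f_nonneg.mono fun x hx ↦ div_nonneg hx hM.le
  rw [measureReal_def, acceptance_lintegral, ← integral_div,
    integral_eq_lintegral_of_nonneg_ae quotient_nonneg
      (hmeas_f.div_const M).aestronglyMeasurable]

theorem stmt3_general {g : E → ℝ} (hmeas_h : Measurable h) (hmeas_f : Measurable f)
    (h_nonneg : ∀ x, 0 ≤ h x) (f_nonneg : 0 ≤ᵐ[μ] f) (hM : 0 < M)
    (hf : ∀ᵐ x ∂μ, f x ≤ M * h x)
    (hX : HasLaw X (μ.withDensity fun x ↦ ENNReal.ofReal (h x)) P)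
    (hV : HasLaw V (volume.restrict (Icc 0 1)) P) (hXV : IndepFun X V P) :
    P.real ({ω | f (X ω) < g (X ω) ∧ V ω * M ≤ f (X ω) / h (X ω)} ∪
        ({ω | g (X ω) ≤ f (X ω) ∧ V ω * M ≤ g (X ω) / h (X ω)} ∪
          {ω | g (X ω) ≤ f (X ω) ∧ g (X ω) / h (X ω) < V ω * M ∧
            V ω * M ≤ f (X ω) / h (X ω)})) =
      (∫ x, f x ∂μ) / M := by
  rw [bidirectional_acceptance_eq_setOf_le_div fun ω ↦ h_nonneg (X ω)]
  exact measureReal_rejection_acceptance hmeas_h hmeas_f f_nonneg hM hf hX hV hXV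

end Sampling

theorem stmt3
    (μ : Measure ℝ) [SigmaFinite μ]
    (h g fhat : ℝ → ℝ)
    (hmeas_h : Measurable h) (hmeas_g : Measurable g) (hmeas_f : Measurable fhat)
    (h_nonneg : ∀ x, 0 ≤ h x) (g_nonneg : ∀ x, 0 ≤ g x) (f_nonneg : ∀ x, 0 ≤ fhat x)
    (h_int : ∫ x, h x ∂μ = 1) (g_int : ∫ x, g x ∂μ = 1) (f_int : ∫ x, fhat x ∂μ = 1)
    (h_pos : ∀ x, 0 < g x + fhat x → 0 < h x)
    (Mstar : ℝ) (hM : 0 < Mstar)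
    (hMf : ∀ᵐ x ∂μ, fhat x ≤ Mstar * h x)
    (hMg : ∀ᵐ x ∂μ, g x ≤ Mstar * h x)
    (Ω : Type*) [MeasurableSpace Ω] (P : Measure Ω) [IsProbabilityMeasure P]
    (X V : Ω → ℝ) (hX : Measurable X) (hV : Measurable V)
    (hXlaw : Measure.map X P = μ.withDensity (fun x => ENNReal.ofReal (h x)))
    (hVlaw : Measure.map V P = volume.restrict (Set.Icc (0:ℝ) 1))
    (hXV : IndepFun X V P) :
    (P ({ω | fhat (X ω) < g (X ω) ∧ V ω * Mstar ≤ fhat (X ω) / h (X ω)}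
        ∪ ({ω | g (X ω) ≤ fhat (X ω) ∧ V ω * Mstar ≤ g (X ω) / h (X ω)}
          ∪ {ω | g (X ω) ≤ fhat (X ω) ∧ g (X ω) / h (X ω) < V ω * Mstar
              ∧ V ω * Mstar ≤ fhat (X ω) / h (X ω)}))).toReal
      = 1 / Mstar := by
  rw [← f_int]
  exact stmt3_general hmeas_h hmeas_f h_nonneg (ae_of_all μ f_nonneg) hM hMf
    ⟨hX.aemeasurable, hXlaw⟩ ⟨hV.aemeasurable, hVlaw⟩ hXV
end

section
/- (Moments of the mid-distribution transform) If X ∼ G, then the random variable G^mid(X) has mean E[G^mid(X)] = 1/2 and variance Var[G^mid(X)] = (1 − Σ_{x ∈ 𝒰} p_G(x)³)/12. -/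
open MeasureTheory

open ProbabilityTheory Set

/-! For `X, Y, Z` independent with law `G`, the mid-distribution function is
`G^mid(x) = E[h(x, Y)]` with `h(x, y) = 1{y < x} + 1{y = x} / 2`. Exchangeability does the rest:
* `h(x, y) + h(y, x) = 1`, so `2 E[G^mid(X)] = 1`;
* `h(x, y) h(x, z) + h(y, z) h(y, x) + h(z, x) h(z, y) = 1 - 1{x = y = z} / 4`, so
  `3 E[G^mid(X)²] = 1 - P(X = Y = Z) / 4`, and `P(X = Y = Z)` is the sum of the cubes of the
  masses of the atoms of `G`. -/

section Symmetrization

variable {α β γ : Type*} [MeasurableSpace α] [MeasurableSpace β] [MeasurableSpace γ]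
  {E : Type*} [NormedAddCommGroup E] [NormedSpace ℝ E]

lemma integral_integral_mul_integral {𝕜 : Type*} [RCLike 𝕜] {μ : Measure α} {ν : Measure β}
    {ρ : Measure γ} [SFinite μ] [SFinite ν] [SFinite ρ] {f : α → β → 𝕜} {g : α → γ → 𝕜}
    (hfg : Integrable (fun w : α × β × γ ↦ f w.1 w.2.1 * g w.1 w.2.2) (μ.prod (ν.prod ρ))) :
    ∫ x, (∫ y, f x y ∂ν) * ∫ z, g x z ∂ρ ∂μ
      = ∫ w, f w.1 w.2.1 * g w.1 w.2.2 ∂μ.prod (ν.prod ρ) := by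
  simp only [integral_prod _ hfg, integral_prod_mul]

lemma integrable_mul_of_bound {𝕜 : Type*} [RCLike 𝕜] (μ : Measure α) (ν : Measure β)
    (ρ : Measure γ) [IsFiniteMeasure μ] [IsFiniteMeasure ν] [IsFiniteMeasure ρ]
    {f : α → β → 𝕜} {g : α → γ → 𝕜} {C D : ℝ} (hf : Measurable fun w : α × β ↦ f w.1 w.2)
    (hg : Measurable fun w : α × γ ↦ g w.1 w.2) (hfC : ∀ x y, ‖f x y‖ ≤ C)
    (hgD : ∀ x z, ‖g x z‖ ≤ D) :
    Integrable (fun w : α × β × γ ↦ f w.1 w.2.1 * g w.1 w.2.2) (μ.prod (ν.prod ρ)) := by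
  have hmeas : Measurable fun w : α × β × γ ↦ f w.1 w.2.1 * g w.1 w.2.2 :=
    (hf.comp (measurable_fst.prodMk measurable_snd.fst)).mul
      (hg.comp (measurable_fst.prodMk measurable_snd.snd))
  refine .of_bound hmeas.aestronglyMeasurable (C * D) (.of_forall fun w ↦ ?_)
  exact norm_mul_le_of_le (hfC _ _) (hgD _ _)

/-- The rotation `(x, y, z) ↦ (y, z, x)` of triples, used to symmetrize triple integrals. -/
def rotateTriple (α β γ : Type*) [MeasurableSpace α] [MeasurableSpace β] [MeasurableSpace γ] :
    α × β × γ ≃ᵐ β × γ × α :=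
  MeasurableEquiv.prodComm.trans MeasurableEquiv.prodAssoc

lemma rotateTriple_apply (w : α × β × γ) : rotateTriple α β γ w = (w.2.1, w.2.2, w.1) := rfl

lemma measurePreserving_rotateTriple (μ : Measure α) (ν : Measure β) (ρ : Measure γ)
    [SFinite μ] [SFinite ν] [SFinite ρ] :
    MeasurePreserving (rotateTriple α β γ) (μ.prod (ν.prod ρ)) (ν.prod (ρ.prod μ)) :=
  (measurePreserving_prodAssoc ν ρ μ).comp Measure.measurePreserving_swap

lemma integral_add_swap {μ : Measure α} [SFinite μ] {f : α × α → E}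
    (hf : Integrable f (μ.prod μ)) :
    ∫ w, (f w + f w.swap) ∂μ.prod μ = 2 • ∫ w, f w ∂μ.prod μ := by
  have hf_swap : Integrable (fun w ↦ f w.swap) (μ.prod μ) := hf.swap
  rw [integral_add hf hf_swap, integral_prod_swap, two_nsmul]

lemma integral_add_rotateTriple {μ : Measure α} [SFinite μ] {f : α × α × α → E}
    (hf : Integrable f (μ.prod (μ.prod μ))) :
    ∫ w, (f w + f (rotateTriple α α α w) + f (rotateTriple α α α (rotateTriple α α α w)))
        ∂μ.prod (μ.prod μ)
      = 3 • ∫ w, f w ∂μ.prod (μ.prod μ) := by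
  have hr := measurePreserving_rotateTriple μ μ μ
  have hf₁ : Integrable (fun w ↦ f (rotateTriple α α α w)) (μ.prod (μ.prod μ)) :=
    hr.integrable_comp_of_integrable hf
  have hf₂ : Integrable (fun w ↦ f (rotateTriple α α α (rotateTriple α α α w)))
      (μ.prod (μ.prod μ)) := hr.integrable_comp_of_integrable hf₁
  have hf₀₁ : Integrable (fun w ↦ f w + f (rotateTriple α α α w)) (μ.prod (μ.prod μ)) :=
    hf.add hf₁
  rw [integral_add hf₀₁ hf₂, integral_add hf hf₁,
    hr.integral_comp' (fun w ↦ f (rotateTriple α α α w)), hr.integral_comp' f]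
  module

end Symmetrization

section Atoms

variable {α : Type*} [MeasurableSpace α] [MeasurableSingletonClass α]

lemma integral_eq_tsum_of_countable_support {E : Type*} [NormedAddCommGroup E] [NormedSpace ℝ E]
    [CompleteSpace E] {μ : Measure α} {f : α → E} (hf : Integrable f μ)
    (hsupp : f.support.Countable) :
    ∫ x, f x ∂μ = ∑' x, μ.real {x} • f x := by
  rw [← setIntegral_eq_integral_of_forall_compl_eq_zero fun _ ↦ Function.notMem_support.mp,
    setIntegral_countable f hsupp hf.integrableOn]
  exact tsum_subtype_eq_of_support_subset
    (f := fun x ↦ μ.real {x} • f x) (Function.support_smul_subset_right _ _)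

lemma integral_measureReal_singleton_pow (μ : Measure α) [IsFiniteMeasure μ] {n : ℕ}
    (hn : n ≠ 0) :
    ∫ x, μ.real {x} ^ n ∂μ = ∑' x, μ.real {x} ^ (n + 1) := by
  have hsupp : (fun x ↦ μ.real {x} ^ n).support.Countable := by
    refine (Measure.countable_meas_level_set_pos (μ := μ) measurable_id).mono fun x hx ↦ ?_
    exact (ENNReal.toReal_ne_zero.mp ((pow_ne_zero_iff hn).mp hx)).1.bot_lt
  have hmeas : Measurable fun x ↦ μ.real {x} ^ n :=
    measurable_zero.measurable_of_countable_ne (by simpa [Function.support, eq_comm] using hsupp)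
  have hint : Integrable (fun x ↦ μ.real {x} ^ n) μ := by
    refine .of_bound hmeas.aestronglyMeasurable (μ.real univ ^ n) (.of_forall fun x ↦ ?_)
    rw [Real.norm_of_nonneg (by positivity)]
    gcongr
    exacts [measure_ne_top μ univ, subset_univ _]
  simp only [integral_eq_tsum_of_countable_support hint hsupp, smul_eq_mul, pow_succ']

end Atoms

section TripleCoincidence

variable {α : Type*} [MeasurableSpace α] [MeasurableEq α]

lemma measurable_indicator_singleton :
    Measurable fun w : α × α ↦ ({w.1} : Set α).indicator (1 : α → ℝ) w.2 :=
  measurable_const.indicator (measurableSet_eq_fun measurable_snd measurable_fst)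

lemma integrable_indicator_singleton_mul (μ ν ρ : Measure α) [IsFiniteMeasure μ]
    [IsFiniteMeasure ν] [IsFiniteMeasure ρ] :
    Integrable (fun w : α × α × α ↦
      ({w.1} : Set α).indicator (1 : α → ℝ) w.2.1 * ({w.1} : Set α).indicator 1 w.2.2)
      (μ.prod (ν.prod ρ)) := by
  have hbound : ∀ x y : α, ‖({x} : Set α).indicator (1 : α → ℝ) y‖ ≤ 1 := fun x y ↦
    (norm_indicator_le_norm_self _ _).trans norm_one.le
  exact integrable_mul_of_bound μ ν ρ measurable_indicator_singleton
    measurable_indicator_singleton hbound hbound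

lemma integral_indicator_singleton_mul (μ : Measure α) [IsFiniteMeasure μ] :
    ∫ w : α × α × α, ({w.1} : Set α).indicator (1 : α → ℝ) w.2.1 *
        ({w.1} : Set α).indicator 1 w.2.2 ∂μ.prod (μ.prod μ)
      = ∑' x, μ.real {x} ^ 3 := by
  rw [← integral_integral_mul_integral (f := fun x ↦ ({x} : Set α).indicator (1 : α → ℝ))
    (g := fun x ↦ ({x} : Set α).indicator 1) (integrable_indicator_singleton_mul μ μ μ)]
  simp only [integral_indicator_one (measurableSet_singleton _), ← pow_two]
  exact integral_measureReal_singleton_pow μ two_ne_zero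

end TripleCoincidence

section MidDistribution

variable {α : Type*} [LinearOrder α]

/-- The kernel `1{y < x} + 1{y = x} / 2`, whose average over `y ∼ μ` is the mid-distribution
function of `μ` at `x`. -/
noncomputable def midKernel (x y : α) : ℝ :=
  (Iic x).indicator 1 y - ({x} : Set α).indicator 1 y / 2

lemma midKernel_add_swap (x y : α) : midKernel x y + midKernel y x = 1 := by
  simp only [midKernel, indicator_apply, mem_Iic, mem_singleton_iff, Pi.one_apply]
  grind

lemma midKernel_mul_add_rotate (x y z : α) :
    midKernel x y * midKernel x z + midKernel y z * midKernel y x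
        + midKernel z x * midKernel z y
      = 1 - ({x} : Set α).indicator 1 y * ({x} : Set α).indicator 1 z / 4 := by
  simp only [midKernel, indicator_apply, mem_Iic, mem_singleton_iff, Pi.one_apply]
  grind

lemma norm_midKernel_le_one (x y : α) : ‖midKernel x y‖ ≤ 1 := by
  simp only [Real.norm_eq_abs, midKernel, indicator_apply, mem_Iic, mem_singleton_iff, Pi.one_apply]
  grind

variable [MeasurableSpace α]

/-- The mid-distribution function `G(x) - p(x) / 2` of `μ`, where `G(x) = μ (-∞, x]` and
`p(x) = μ {x}`. -/
noncomputable def midCDF (μ : Measure α) (x : α) : ℝ :=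
  μ.real (Iic x) - μ.real {x} / 2

variable [TopologicalSpace α] [OrderClosedTopology α] [OpensMeasurableSpace α]

lemma integral_midKernel (μ : Measure α) [IsFiniteMeasure μ] (x : α) :
    ∫ y, midKernel x y ∂μ = midCDF μ x := by
  have hIic : Integrable ((Iic x).indicator (1 : α → ℝ)) μ :=
    (integrable_const 1).indicator measurableSet_Iic
  have hsingleton : Integrable (({x} : Set α).indicator (1 : α → ℝ)) μ :=
    (integrable_const 1).indicator (measurableSet_singleton x)
  simp only [midKernel, midCDF]
  rw [integral_sub hIic (hsingleton.div_const 2), integral_div,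
    integral_indicator_one measurableSet_Iic, integral_indicator_one (measurableSet_singleton x)]

variable [SecondCountableTopology α]

lemma measurable_midKernel : Measurable fun w : α × α ↦ midKernel w.1 w.2 := by
  have hIic : Measurable fun w : α × α ↦ (Iic w.1).indicator (1 : α → ℝ) w.2 :=
    measurable_const.indicator (measurableSet_le measurable_snd measurable_fst)
  exact hIic.sub (measurable_indicator_singleton.div_const 2)

lemma integrable_midKernel (μ ν : Measure α) [IsFiniteMeasure μ] [IsFiniteMeasure ν] :
    Integrable (fun w : α × α ↦ midKernel w.1 w.2) (μ.prod ν) :=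
  .of_bound measurable_midKernel.aestronglyMeasurable 1
    (.of_forall fun w ↦ norm_midKernel_le_one w.1 w.2)

lemma integrable_midKernel_mul (μ ν ρ : Measure α) [IsFiniteMeasure μ] [IsFiniteMeasure ν]
    [IsFiniteMeasure ρ] :
    Integrable (fun w : α × α × α ↦ midKernel w.1 w.2.1 * midKernel w.1 w.2.2)
      (μ.prod (ν.prod ρ)) :=
  integrable_mul_of_bound μ ν ρ measurable_midKernel measurable_midKernel
    norm_midKernel_le_one norm_midKernel_le_one

lemma measurable_midCDF (μ : Measure α) [IsFiniteMeasure μ] : Measurable (midCDF μ) := by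
  simpa only [integral_midKernel] using
    (measurable_midKernel.stronglyMeasurable.integral_prod_right' (ν := μ)).measurable

lemma memLp_midCDF (μ : Measure α) [IsFiniteMeasure μ] (q : ENNReal) : MemLp (midCDF μ) q μ := by
  refine .of_bound (measurable_midCDF μ).aestronglyMeasurable (μ.real univ)
    (.of_forall fun x ↦ ?_)
  have h := norm_integral_le_of_norm_le_const (μ := μ) (.of_forall (norm_midKernel_le_one x))
  rwa [integral_midKernel, one_mul] at h

lemma integral_midCDF (μ : Measure α) [IsProbabilityMeasure μ] : ∫ x, midCDF μ x ∂μ = 1 / 2 := by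
  have hint := integrable_midKernel μ μ
  have hsymm := integral_add_swap hint
  simp only [Prod.fst_swap, Prod.snd_swap, midKernel_add_swap, integral_const, probReal_univ,
    integral_prod _ hint, integral_midKernel, smul_eq_mul, nsmul_eq_mul,
    Nat.cast_ofNat] at hsymm
  linarith

lemma integral_midCDF_sq (μ : Measure α) [IsProbabilityMeasure μ] :
    ∫ x, midCDF μ x ^ 2 ∂μ = 1 / 3 - (∑' x, μ.real {x} ^ 3) / 12 := by
  have hint := integrable_midKernel_mul μ μ μ
  have hsymm : ∫ w : α × α × α, (1 - ({w.1} : Set α).indicator (1 : α → ℝ) w.2.1 *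
        ({w.1} : Set α).indicator 1 w.2.2 / 4) ∂μ.prod (μ.prod μ)
      = 3 * ∫ x, midCDF μ x ^ 2 ∂μ := by
    simp only [← integral_midKernel, pow_two, integral_integral_mul_integral hint,
      ← midKernel_mul_add_rotate]
    simpa only [nsmul_eq_mul, Nat.cast_ofNat, rotateTriple_apply] using
      integral_add_rotateTriple hint
  rw [integral_sub (integrable_const 1) ((integrable_indicator_singleton_mul μ μ μ).div_const 4),
    integral_div, integral_indicator_singleton_mul, integral_const, probReal_univ,
    one_smul] at hsymm
  linarith

theorem variance_midCDF (μ : Measure α) [IsProbabilityMeasure μ] :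
    Var[midCDF μ; μ] = (1 - ∑' x, μ.real {x} ^ 3) / 12 := by
  rw [variance_eq_sub (memLp_midCDF μ 2)]
  simp only [Pi.pow_apply, integral_midCDF, integral_midCDF_sq]
  ring

theorem stmt16_general {Ω : Type*} [MeasurableSpace Ω] (P : Measure Ω) [IsProbabilityMeasure P]
    (X : Ω → α) (hX : AEMeasurable X P)
    (p : α → ℝ) (hp : ∀ x, p x = (P {ω | X ω = x}).toReal)
    (G : α → ℝ) (hG : ∀ x, G x = (P {ω | X ω ≤ x}).toReal)
    (Gmid : α → ℝ) (hGmid : ∀ x, Gmid x = G x - 0.5 * p x) :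
    (∫ ω, Gmid (X ω) ∂P = 1 / 2)
    ∧ ∫ ω, (Gmid (X ω) - ∫ ω', Gmid (X ω') ∂P) ^ 2 ∂P = (1 - ∑' x, p x ^ 3) / 12 := by
  have : IsProbabilityMeasure (P.map X) := Measure.isProbabilityMeasure_map hX
  have hp_law : ∀ x, p x = (P.map X).real {x} := fun x ↦ by
    rw [hp, map_measureReal_apply_of_aemeasurable hX (measurableSet_singleton x)]; rfl
  have hG_law : ∀ x, G x = (P.map X).real (Iic x) := fun x ↦ by
    rw [hG, map_measureReal_apply_of_aemeasurable hX measurableSet_Iic]; rfl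
  obtain rfl : Gmid = midCDF (P.map X) := by
    ext x
    rw [hGmid, hG_law, hp_law, midCDF]
    ring
  have hmeas := measurable_midCDF (P.map X)
  constructor
  · rw [← integral_map hX hmeas.aestronglyMeasurable, integral_midCDF]
  · simp only [hp_law, ← variance_midCDF, variance_map hmeas.aemeasurable hX]
    exact (variance_eq_integral (hmeas.comp_aemeasurable hX)).symm

end MidDistribution

/-- Moments of the mid-distribution transform: if `X ~ G`, then
`E[G^mid(X)] = 1/2` and `Var[G^mid(X)] = (1 − Σ_{x ∈ 𝒰} p_G(x)³)/12`. -/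
theorem stmt16
    (Ω : Type*) [MeasurableSpace Ω] (P : Measure Ω) [IsProbabilityMeasure P]
    (𝒰 : Finset ℝ) (X : Ω → ℝ) (hX : Measurable X)
    (hXmem : ∀ ω, X ω ∈ 𝒰)
    (p : ℝ → ℝ) (hp : ∀ x, p x = (P {ω | X ω = x}).toReal)
    (G : ℝ → ℝ) (hG : ∀ x, G x = (P {ω | X ω ≤ x}).toReal)
    (Gmid : ℝ → ℝ) (hGmid : ∀ x, Gmid x = G x - 0.5 * p x) :
    (∫ ω, Gmid (X ω) ∂P = 1 / 2)
    ∧ ∫ ω, (Gmid (X ω) - ∫ ω', Gmid (X ω') ∂P) ^ 2 ∂P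
        = (1 - ∑ x ∈ 𝒰, (p x) ^ 3) / 12 := by
  rw [← tsum_eq_sum (L := .unconditional ℝ) fun x hx ↦ by
    simp [hp, ne_of_mem_of_not_mem (hXmem _) hx]]
  exact stmt16_general P X hX.aemeasurable p hp G hG Gmid hGmid
end
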